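/- Let S : ℝ^r → ℝ^r be continuous, θ* ∈ ℝ^r, and ξ > 0. If (θ − θ*)ᵀ S(θ) ≤ 0 for all θ on the sphere ‖θ − θ*‖ = ξ, then there exists θ̃ with ‖θ̃ − θ*‖ ≤ ξ and S(θ̃) = 0. -/

import Mathlib

/-!
The vector field `-S` points weakly outwards on the sphere. If `S` had no zero in the closed ball,
`-S` could be interpolated, across a shell, with the identity, giving a continuous nowhere zero
field which equals `x ↦ x` far away (`exists_nonvanishing_extension`); a partition of unity makes
it smooth (`exists_smooth_nonvanishing`). Normalizing it yields a smooth map `G` whose values lie on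
a sphere of radius `R` and which fixes that sphere pointwise, so it remains to prove the
no-retraction theorem (`no_smooth_retraction`).

This follows from the Milnor–Rogers volume argument. Write `u = G - id` and `f t = id + t • u`. For
small `t ≥ 0`, `f t` permutes the open ball of radius `R` (`u`, extended by zero, is Lipschitz, so
`f t` is a perturbation of the identity by a contraction) and has positive Jacobian, hence
`∫ det (D f t) = vol B`. The integrand is a polynomial in `t` of degree at most `dim E`, so its
value at `t = 1` is a fixed affine combination of its values at small nodes, and
`∫ det (D G) = vol B > 0`. But `G` takes values in a sphere, so `det (D G) = 0`.
-/

open RealInnerProductSpace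

open MeasureTheory Set Metric Topology
open scoped NNReal ContDiff Manifold

section NoRetraction

variable {E : Type*} [NormedAddCommGroup E] [InnerProductSpace ℝ E]

/-- A map that is Lipschitz on a closed ball and vanishes on its boundary sphere stays Lipschitz
when extended by zero: a segment leaving the ball meets the sphere. -/
lemma lipschitz_extend_zero {u : E → E} {R : ℝ} {K : ℝ≥0}
    (hu : LipschitzOnWith K u (closedBall 0 R)) (h0 : ∀ x, ‖x‖ = R → u x = 0) :
    LipschitzWith K ((closedBall (0 : E) R).indicator u) := by
  have key : ∀ x y : E, x ∈ closedBall (0 : E) R → y ∉ closedBall (0 : E) R →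
      ‖u x‖ ≤ K * ‖x - y‖ := by
    intro x y hx hy
    rw [mem_closedBall_zero_iff] at hx hy
    have hc : ContinuousOn (fun s : ℝ => ‖x + s • (y - x)‖) (Icc 0 1) := by fun_prop
    have := intermediate_value_Icc (zero_le_one) hc
    obtain ⟨s, hs, hsR⟩ := this (show R ∈ _ by
      constructor
      · simpa using hx
      · simpa using (not_le.1 hy).le)
    simp only at hsR
    have h1 := hu.norm_sub_le (mem_closedBall_zero_iff.2 hx) (mem_closedBall_zero_iff.2 hsR.le)
    rw [h0 _ hsR, sub_zero] at h1
    refine h1.trans (mul_le_mul_of_nonneg_left ?_ K.2)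
    have : x - (x + s • (y - x)) = s • (x - y) := by module
    rw [this, norm_smul, Real.norm_of_nonneg hs.1]
    exact mul_le_of_le_one_left (norm_nonneg _) hs.2
  refine LipschitzWith.of_dist_le_mul fun x y => ?_
  rw [dist_eq_norm, dist_eq_norm]
  by_cases hx : x ∈ closedBall (0 : E) R <;> by_cases hy : y ∈ closedBall (0 : E) R
  · simpa [indicator_of_mem hx, indicator_of_mem hy] using hu.norm_sub_le hx hy
  · simpa [indicator_of_mem hx, indicator_of_notMem hy] using key x y hx hy
  · have := key y x hy hx
    rw [norm_sub_rev y x] at this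
    simpa [indicator_of_notMem hx, indicator_of_mem hy] using this
  · simp only [indicator_of_notMem hx, indicator_of_notMem hy, sub_zero, norm_zero]
    positivity

lemma bijective_id_add_contraction {F : Type*} [NormedAddCommGroup F] [CompleteSpace F]
    {v : F → F} {k : ℝ≥0} (hk : k < 1)
    (hv : LipschitzWith k v) : Function.Bijective (fun x => x + v x) := by
  constructor
  · intro x y hxy
    simp only at hxy
    have h1 := hv.norm_sub_le x y
    have h2 : v x - v y = y - x := by
      rw [sub_eq_sub_iff_add_eq_add, add_comm, hxy, add_comm]
    rw [h2, norm_sub_rev] at h1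
    have h3 : (k : ℝ) < 1 := hk
    have : ‖x - y‖ = 0 := by nlinarith [norm_nonneg (x - y)]
    exact sub_eq_zero.1 (norm_eq_zero.1 this)
  · intro y
    have hc : ContractingWith k (fun x => y - v x) :=
      ⟨hk, by simpa using (LipschitzWith.const y).sub hv⟩
    refine ⟨hc.fixedPoint, ?_⟩
    have := hc.fixedPoint_isFixedPt
    exact eq_sub_iff_add_eq.1 this.symm

/-- A bijection that is the identity off a set permutes that set. -/
lemma image_eq_of_eqOn_compl {α : Type*} {f : α → α} (hf : Function.Bijective f) {s : Set α}
    (h : ∀ x ∉ s, f x = x) : f '' s = s := by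
  ext y
  constructor
  · rintro ⟨x, hx, rfl⟩
    by_contra hy
    have := hf.1 (h _ hy)
    rw [this] at hy
    exact hy hx
  · intro hy
    obtain ⟨x, rfl⟩ := hf.2 y
    by_cases hx : x ∈ s
    · exact ⟨x, hx, rfl⟩
    · rw [h x hx] at hy
      exact absurd hy hx

/-- Along a line through the identity, the determinant is a polynomial of degree at most `dim E`. -/
lemma exists_polynomial_det [FiniteDimensional ℝ E] (A : E →L[ℝ] E) :
    ∃ p : Polynomial ℝ, p.natDegree ≤ Module.finrank ℝ E ∧
      ∀ t : ℝ, p.eval t = (ContinuousLinearMap.id ℝ E + t • A).det := by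
  classical
  let b := Module.finBasis ℝ E
  let M := LinearMap.toMatrix b b (A : E →ₗ[ℝ] E)
  refine ⟨Matrix.det ((Polynomial.X : Polynomial ℝ) • M.map Polynomial.C
    + (1 : Matrix _ _ ℝ).map Polynomial.C), ?_, fun t => ?_⟩
  · simpa using Polynomial.natDegree_det_X_add_C_le M 1
  · rw [ContinuousLinearMap.det, ← LinearMap.det_toMatrix b, ← Polynomial.coe_evalRingHom,
      RingHom.map_det]
    congr 1
    ext i j
    simp [M, LinearMap.toMatrix_apply, Matrix.one_apply,
      Finsupp.single_apply, add_comm, eq_comm]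
    split_ifs <;> simp [mul_comm]

/-- Lagrange interpolation: with nodes `v i`, the value at `1` of every polynomial of degree at
most `n` is the same affine combination of its values at the nodes. -/
lemma exists_extrapolation_weights (n : ℕ) (v : Fin (n + 1) → ℝ) (hv : Function.Injective v) :
    ∃ c : Fin (n + 1) → ℝ, ∑ i, c i = 1 ∧
      ∀ p : Polynomial ℝ, p.natDegree ≤ n → p.eval 1 = ∑ i, c i * p.eval (v i) := by
  refine ⟨fun i => (Lagrange.basis Finset.univ v i).eval 1, ?_, fun p hp => ?_⟩
  · rw [← Polynomial.eval_finsetSum, Lagrange.sum_basis hv.injOn Finset.univ_nonempty,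
      Polynomial.eval_one]
  · have hd : p.degree < (Finset.univ : Finset (Fin (n + 1))).card := by
      rw [Finset.card_fin]
      exact (Polynomial.degree_le_of_natDegree_le hp).trans_lt (by exact_mod_cast Nat.lt_succ_self n)
    conv_lhs => rw [Lagrange.eq_interpolate hv.injOn hd]
    rw [Lagrange.interpolate_apply, Polynomial.eval_finsetSum]
    refine Finset.sum_congr rfl fun i _ => ?_
    rw [Polynomial.eval_mul, Polynomial.eval_C, mul_comm]

lemma exists_lipschitzOn_closedBall [FiniteDimensional ℝ E] {u : E → E} (hu : ContDiff ℝ 1 u) (R : ℝ) :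
    ∃ K : ℝ≥0, LipschitzOnWith K u (closedBall 0 R) ∧
      ∀ x ∈ closedBall (0 : E) R, ‖fderiv ℝ u x‖ ≤ K := by
  obtain ⟨C, hC⟩ := (isCompact_closedBall (0 : E) R).exists_bound_of_continuousOn
    (hu.continuous_fderiv one_ne_zero).continuousOn
  have hK : ∀ x ∈ closedBall (0 : E) R, ‖fderiv ℝ u x‖ ≤ C.toNNReal :=
    fun x hx => (hC x hx).trans (Real.le_coe_toNNReal C)
  exact ⟨C.toNNReal, (convex_closedBall _ _).lipschitzOnWith_of_nnnorm_fderiv_le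
    (fun x _ => (hu.differentiable one_ne_zero) x) hK, hK⟩

lemma det_fderiv_eq_zero_of_norm_eq [FiniteDimensional ℝ E] {G : E → E} {R : ℝ} (hR : 0 < R) {x : E}
    (hG : DifferentiableAt ℝ G x) (hn : ∀ y, ‖G y‖ = R) : (fderiv ℝ G x).det = 0 := by
  by_contra hdet
  have hunit : IsUnit (LinearMap.det (fderiv ℝ G x : E →ₗ[ℝ] E)) := isUnit_iff_ne_zero.2 hdet
  have hunit' : IsUnit (fderiv ℝ G x : E →ₗ[ℝ] E) := (LinearMap.isUnit_iff_isUnit_det _).2 hunit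
  obtain ⟨v, hv⟩ : ∃ v, fderiv ℝ G x v = G x :=
    ((Module.End.isUnit_iff _).1 hunit').surjective (G x)
  have h1 : HasFDerivAt (fun y => ‖G y‖ ^ 2) _ x := hG.hasFDerivAt.norm_sq
  have h2 : HasFDerivAt (fun y => ‖G y‖ ^ 2) (0 : E →L[ℝ] ℝ) x := by
    simp only [hn]
    exact hasFDerivAt_const _ _
  have h3 := congrArg (fun L : E →L[ℝ] ℝ => L v) (h1.unique h2)
  simp [hv, hn] at h3
  exact hR.ne' h3

/-- No smooth map with values in a sphere of positive radius fixes that sphere pointwise. -/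
lemma no_smooth_retraction [FiniteDimensional ℝ E] {G : E → E} {R : ℝ} (hR : 0 < R) (hG : ContDiff ℝ 1 G)
    (hn : ∀ y, ‖G y‖ = R) (hfix : ∀ y, ‖y‖ = R → G y = y) : False := by
  let _ : MeasurableSpace E := borel E
  have _ : BorelSpace E := ⟨rfl⟩
  set u : E → E := fun x => G x - x with hu
  have hud : ContDiff ℝ 1 u := hG.sub contDiff_id
  obtain ⟨K, hKL, hKd⟩ := exists_lipschitzOn_closedBall hud R
  have hext := lipschitz_extend_zero hKL (fun x hx => by simp [hu, hfix x hx])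
  set B := ball (0 : E) R with hB
  let D : ℝ → E → ℝ := fun t x => (ContinuousLinearMap.id ℝ E + t • fderiv ℝ u x).det
  have hDc : ∀ t, Continuous (D t) := fun t =>
    ContinuousLinearMap.continuous_det.comp
      (continuous_const.add ((hud.continuous_fderiv one_ne_zero).const_smul t))
  have hDint : ∀ t, IntegrableOn (D t) B := fun t =>
    ((hDc t).continuousOn.integrableOn_compact (isCompact_closedBall (0 : E) R)).mono_set
      ball_subset_closedBall
  obtain ⟨ε, hε, hpos⟩ : ∃ ε > 0, ∀ L : E →L[ℝ] E,
      ‖L‖ < ε → 0 < (ContinuousLinearMap.id ℝ E + L).det := by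
    have hc : Continuous fun L : E →L[ℝ] E => (ContinuousLinearMap.id ℝ E + L).det :=
      ContinuousLinearMap.continuous_det.comp (continuous_const.add continuous_id)
    have h0 : (0 : ℝ) < (ContinuousLinearMap.id ℝ E + (0 : E →L[ℝ] E)).det := by
      rw [add_zero]
      simp [ContinuousLinearMap.det]
    obtain ⟨ε, hε, h⟩ := Metric.eventually_nhds_iff.1 (hc.continuousAt.eventually (lt_mem_nhds h0))
    exact ⟨ε, hε, fun L hL => h (by simpa using hL)⟩
  have hsmall : ∀ t : ℝ≥0, t * K < 1 → (t * K : ℝ) < ε →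
      ∫ x in B, D t x = volume.real B := by
    intro t ht1 htε
    set f : E → E := fun x => x + (t : ℝ) • (closedBall (0 : E) R).indicator u x with hf
    have hbij : Function.Bijective f := by
      refine bijective_id_add_contraction ht1 ?_
      refine LipschitzWith.of_dist_le_mul fun x y => ?_
      rw [dist_eq_norm, ← smul_sub, norm_smul, NNReal.norm_eq, NNReal.coe_mul, mul_assoc,
        ← dist_eq_norm]
      exact mul_le_mul_of_nonneg_left (hext.dist_le_mul x y) t.2
    have himg : f '' B = B := by
      refine image_eq_of_eqOn_compl hbij fun x hx => ?_
      have : (closedBall (0 : E) R).indicator u x = 0 := by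
        by_cases hx' : x ∈ closedBall (0 : E) R
        · rw [indicator_of_mem hx']
          have : ‖x‖ = R := le_antisymm (by simpa using hx') (by simpa [hB] using hx)
          simp [hu, hfix x this]
        · exact indicator_of_notMem hx' _
      simp [hf, this]
    have hder : ∀ x ∈ B, HasFDerivWithinAt f
        (ContinuousLinearMap.id ℝ E + (t : ℝ) • fderiv ℝ u x) B x := by
      intro x hx
      have h1 : HasFDerivAt (fun x => x + (t : ℝ) • u x)
          (ContinuousLinearMap.id ℝ E + (t : ℝ) • fderiv ℝ u x) x :=
        (hasFDerivAt_id x).add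
          (((hud.differentiable one_ne_zero) x).hasFDerivAt.const_smul (t : ℝ))
      refine h1.hasFDerivWithinAt.congr (fun y hy => ?_) ?_
      · simp only [hf, indicator_of_mem (ball_subset_closedBall hy)]
      · simp only [hf, indicator_of_mem (ball_subset_closedBall hx)]
    have hcv := integral_image_eq_integral_abs_det_fderiv_smul volume measurableSet_ball hder
      hbij.1.injOn (fun _ => (1 : ℝ))
    rw [himg] at hcv
    simp only [smul_eq_mul, mul_one, setIntegral_const] at hcv
    rw [hcv]
    refine setIntegral_congr_fun measurableSet_ball fun x hx => ?_
    refine (abs_of_pos (hpos _ (lt_of_le_of_lt ?_ htε))).symm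
    rw [norm_smul, NNReal.norm_eq]
    exact mul_le_mul_of_nonneg_left (hKd x (ball_subset_closedBall hx)) t.2
  -- The nodes `δ / (i + 1)` are distinct and lie in the range where `hsmall` applies.
  obtain ⟨δ, hδ, hδ1, hδε⟩ : ∃ δ : ℝ≥0, 0 < δ ∧ δ * K < 1 ∧ (δ * K : ℝ) < ε := by
    have hm : 0 < min 1 ε := lt_min one_pos hε
    refine ⟨⟨min 1 ε / (K + 1), by positivity⟩, ?_, ?_⟩
    · exact div_pos hm (by positivity)
    · have : min 1 ε / (K + 1) * (K : ℝ) < min 1 ε := by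
        rw [div_mul_eq_mul_div, div_lt_iff₀ (by positivity)]
        nlinarith
      exact ⟨this.trans_le (min_le_left _ _), this.trans_le (min_le_right _ _)⟩
  set n := Module.finrank ℝ E
  let τ : Fin (n + 1) → ℝ≥0 := fun i => δ / ((i : ℕ) + 1)
  have hτinj : Function.Injective fun i => (τ i : ℝ) := by
    intro i j hij
    have h1 : δ / (((i : ℕ) : ℝ≥0) + 1) = δ / (((j : ℕ) : ℝ≥0) + 1) := NNReal.coe_injective hij
    rw [div_eq_mul_inv, div_eq_mul_inv] at h1
    replace h1 := inv_injective (mul_left_cancel₀ hδ.ne' h1)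
    exact Fin.ext (by exact_mod_cast add_right_cancel h1)
  have hτle : ∀ i, τ i ≤ δ := fun i => div_le_self (zero_le) (by simp)
  have hτint : ∀ i, ∫ x in B, D (τ i) x = volume.real B := fun i =>
    hsmall (τ i) ((mul_le_mul_left (hτle i) K).trans_lt hδ1)
      ((mul_le_mul_of_nonneg_right (NNReal.coe_le_coe.2 (hτle i)) K.2).trans_lt hδε)
  obtain ⟨c, hc1, hc⟩ := exists_extrapolation_weights n _ hτinj
  have hD1 : ∀ x, D 1 x = ∑ i, c i * D (τ i) x := by
    intro x
    obtain ⟨p, hp, hpe⟩ := exists_polynomial_det (fderiv ℝ u x)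
    have := hc p hp
    simpa only [hpe] using this
  have hint1 : ∫ x in B, D 1 x = volume.real B := by
    simp only [hD1]
    rw [integral_finsetSum _ fun i _ => (hDint (τ i)).const_mul (c i)]
    simp only [integral_const_mul, hτint]
    rw [← Finset.sum_mul, hc1, one_mul]
  have hD0 : ∀ x, D 1 x = 0 := by
    intro x
    have hGx := (hG.differentiable one_ne_zero) x
    have : fderiv ℝ u x = fderiv ℝ G x - ContinuousLinearMap.id ℝ E := by
      rw [hu, fderiv_fun_sub hGx differentiableAt_fun_id, fderiv_fun_id]
    simp only [D, this, one_smul, add_sub_cancel]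
    exact det_fderiv_eq_zero_of_norm_eq hR hGx hn
  simp only [hD0, integral_zero] at hint1
  exact (ENNReal.toReal_pos (measure_ball_pos volume (0 : E) hR).ne' measure_ball_lt_top.ne).ne hint1

/-- A continuous nowhere zero field that is the identity outside the ball of radius `2` can be
smoothed without creating zeros, keeping it the identity outside the ball of radius `3`. -/
lemma exists_smooth_nonvanishing [FiniteDimensional ℝ E] {w : E → E} (hw : Continuous w) (h0 : ∀ x, w x ≠ 0)
    (hid : ∀ x, 2 ≤ ‖x‖ → w x = x) :
    ∃ q : E → E, ContDiff ℝ 1 q ∧ (∀ x, q x ≠ 0) ∧ ∀ x, 3 ≤ ‖x‖ → q x = x := by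
  classical
  -- Values in `t x` are nonzero, since the ball around `w x` of radius `‖w x‖` omits `0`.
  let t : E → Set E := fun x => if ‖x‖ < 3 then ball (w x) ‖w x‖ else {x}
  have ht : ∀ x, Convex ℝ (t x) := by
    intro x
    simp only [t]
    split_ifs
    · exact convex_ball _ _
    · exact convex_singleton _
  obtain ⟨q, hq⟩ := exists_contMDiffMap_forall_mem_convex_of_local (n := 1) 𝓘(ℝ, E) ht (by
    intro x
    by_cases hx : ‖x‖ < 3
    · have h1 : ∀ᶠ y in 𝓝 x, ‖y‖ < 3 := continuous_norm.continuousAt.eventually (gt_mem_nhds hx)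
      have h2 : ∀ᶠ y in 𝓝 x, 0 < ‖w y‖ - ‖w x - w y‖ := by
        have hcont : Continuous fun y => ‖w y‖ - ‖w x - w y‖ := by fun_prop
        exact hcont.continuousAt.eventually (lt_mem_nhds (by simpa using h0 x))
      refine ⟨_, h1.and h2, fun _ => w x, contMDiffOn_const, fun y hy => ?_⟩
      simp only [t, if_pos hy.1, mem_ball, dist_eq_norm]
      linarith [hy.2]
    · have h1 : ∀ᶠ y in 𝓝 x, 2 < ‖y‖ :=
        continuous_norm.continuousAt.eventually (lt_mem_nhds (by linarith))
      refine ⟨_, h1, fun y => y, contMDiffOn_id, fun y hy => ?_⟩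
      simp only [t]
      split_ifs
      · rw [hid y (le_of_lt hy), mem_ball, dist_self, norm_pos_iff]
        rintro rfl
        simp at hy
        linarith
      · rfl)
  refine ⟨q, q.contMDiff.contDiff, fun x hx => ?_, fun x hx => ?_⟩
  · have := hq x
    rw [hx] at this
    simp only [t] at this
    split_ifs at this with h
    · simp at this
    · rw [mem_singleton_iff] at this
      subst this
      simp at h
  · have := hq x
    simpa only [t, if_neg (not_lt.2 hx), mem_singleton_iff] using this

/-- If `S` is zero-free on the unit ball and points weakly inwards on the unit sphere, then `-S` on
the ball is joined to the identity outside the ball of radius `2` without creating zeros. -/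
lemma exists_nonvanishing_extension {S : E → E} (hS : Continuous S)
    (h : ∀ x, ‖x‖ = 1 → ⟪x, S x⟫ ≤ 0) (h0 : ∀ x, ‖x‖ ≤ 1 → S x ≠ 0) :
    ∃ w : E → E, Continuous w ∧ (∀ x, w x ≠ 0) ∧ ∀ x, 2 ≤ ‖x‖ → w x = x := by
  have hpos : ∀ x : E, max 1 ‖x‖ ≠ 0 := fun x => ne_of_gt (lt_max_of_lt_left one_pos)
  -- `S` is evaluated at the radial projection of `x` onto the unit ball.
  refine ⟨fun x => min 1 (max 0 (‖x‖ - 1)) • x - max 0 (2 - ‖x‖) • S ((max 1 ‖x‖)⁻¹ • x),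
    ?_, fun x hx => ?_, fun x hx => ?_⟩
  · have h1 : Continuous fun x : E => (max 1 ‖x‖)⁻¹ :=
      (continuous_const.max continuous_norm).inv₀ hpos
    have h2 : Continuous fun x : E => S ((max 1 ‖x‖)⁻¹ • x) := hS.comp (h1.smul continuous_id)
    fun_prop
  · simp only at hx
    rcases le_or_gt ‖x‖ 1 with hx1 | hx1
    · rw [max_eq_left (by linarith : ‖x‖ - 1 ≤ 0), max_eq_left hx1,
        max_eq_right (by linarith : 0 ≤ 2 - ‖x‖), min_eq_right zero_le_one, inv_one, one_smul,
        zero_smul, zero_sub, neg_eq_zero, smul_eq_zero] at hx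
      rcases hx with hx | hx
      · linarith
      · exact h0 x hx1 hx
    · have hxp : 0 < ‖x‖ := by linarith
      have hin := congrArg (fun y => ⟪x, y⟫) hx
      simp only [inner_sub_right, inner_smul_right, inner_zero_right,
        real_inner_self_eq_norm_sq, max_eq_right hx1.le] at hin
      have h1 := h (‖x‖⁻¹ • x) (by
        rw [norm_smul, norm_inv, norm_norm, inv_mul_cancel₀ hxp.ne'])
      rw [real_inner_smul_left] at h1
      have h2 : ⟪x, S (‖x‖⁻¹ • x)⟫ ≤ 0 := by
        by_contra hc
        exact absurd h1 (not_le.2 (mul_pos (inv_pos.2 hxp) (not_le.1 hc)))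
      have h3 : 0 < min 1 (max 0 (‖x‖ - 1)) :=
        lt_min one_pos (lt_max_of_lt_right (by linarith))
      have h4 : 0 ≤ max 0 (2 - ‖x‖) := le_max_left _ _
      have h5 := mul_pos h3 (pow_pos hxp 2)
      have h6 := mul_nonneg h4 (neg_nonneg.2 h2)
      linarith
  · simp only
    rw [max_eq_left (by linarith : 2 - ‖x‖ ≤ 0), zero_smul, sub_zero,
      max_eq_right (by linarith : 0 ≤ ‖x‖ - 1), min_eq_left (by linarith), one_smul]

lemma exists_zero_unit_ball [FiniteDimensional ℝ E] {S : E → E} (hS : Continuous S)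
    (h : ∀ x, ‖x‖ = 1 → ⟪x, S x⟫ ≤ 0) : ∃ x, ‖x‖ ≤ 1 ∧ S x = 0 := by
  by_contra! h0
  obtain ⟨w, hw, hw0, hwid⟩ := exists_nonvanishing_extension hS h h0
  obtain ⟨q, hq, hq0, hqid⟩ := exists_smooth_nonvanishing hw hw0 hwid
  refine no_smooth_retraction (G := fun x => (3 * ‖q x‖⁻¹) • q x) (R := 3) (by norm_num)
    ?_ (fun x => ?_) (fun x hx => ?_)
  · exact (contDiff_const.mul ((hq.norm ℝ hq0).inv fun x => norm_ne_zero_iff.2 (hq0 x))).smul hq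
  · have := norm_ne_zero_iff.2 (hq0 x)
    rw [norm_smul, norm_mul, norm_inv, norm_norm, mul_assoc, inv_mul_cancel₀ this]
    norm_num
  · simp only [hqid x hx.ge, hx]
    norm_num

end NoRetraction

/-- Ortega–Rheinboldt zero-existence: if `S` is continuous and
`(θ − θ*)ᵀ S(θ) ≤ 0` on the sphere `‖θ − θ*‖ = ξ`, then `S` has a zero in the closed ball of
radius `ξ` around `θ*`. -/
theorem exists_zero_of_inner_nonpos_on_sphere {r : ℕ}
    (S : EuclideanSpace ℝ (Fin r) → EuclideanSpace ℝ (Fin r)) (hS : Continuous S)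
    (θs : EuclideanSpace ℝ (Fin r)) (ξ : ℝ) (hξ : 0 < ξ)
    (h : ∀ θ, ‖θ - θs‖ = ξ → ⟪θ - θs, S θ⟫ ≤ 0) :
    ∃ θt, ‖θt - θs‖ ≤ ξ ∧ S θt = 0 := by
  obtain ⟨x, hx, hSx⟩ := exists_zero_unit_ball (S := fun x => S (θs + ξ • x)) (by fun_prop)
    (fun x hx => by
      have h1 := h (θs + ξ • x) (by
        rw [add_sub_cancel_left, norm_smul, hx, mul_one, Real.norm_of_nonneg hξ.le])
      rw [add_sub_cancel_left, real_inner_smul_left] at h1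
      by_contra hc
      exact absurd h1 (not_le.2 (mul_pos hξ (not_le.1 hc))))
  refine ⟨θs + ξ • x, ?_, hSx⟩
  rw [add_sub_cancel_left, norm_smul, Real.norm_of_nonneg hξ.le]
  exact mul_le_of_le_one_right hξ.le hx
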